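/- arXiv:1603.04277 — 2 statements merged into one kernel-verified Lean document; each statement's English description precedes it below -/
import Mathlib

section
/- Let α : ℝ^n → ℝ be locally log-Hölder continuous with constant c_log(α), and let R ≥ c_log(α). Then there exists a constant c > 0, independent of x, y, v and h, such that 2^{vα(x)} η_{v,h+R}(x − y) ≤ c 2^{vα(y)} η_{v,h}(x − y) for all x, y ∈ ℝ^n and all v, h ∈ ℕ₀. -/
open MeasureTheory ENNReal Real Set

noncomputable section

/-- Euclidean space ℝ^n. -/
abbrev En (n : ℕ) := EuclideanSpace ℝ (Fin n)

/-- `g` is locally log-Hölder continuous with constant `c`. -/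
def LocLogHolder {n : ℕ} (c : ℝ) (g : En n → ℝ) : Prop :=
  0 < c ∧ ∀ x y : En n, |g x - g y| ≤ c / Real.log (Real.exp 1 + 1 / ‖x - y‖)

/-- `g` is globally log-Hölder continuous with local constant `c`. -/
def GlobLogHolder {n : ℕ} (c : ℝ) (g : En n → ℝ) : Prop :=
  LocLogHolder c g ∧
    ∃ (gi cd : ℝ), 0 < cd ∧ ∀ x : En n, |g x - gi| ≤ cd / Real.log (Real.exp 1 + ‖x‖)

/-- The kernel η_{v,h}(x) = 2^{nv} (1 + 2^v |x|)^{-h}. -/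
def eta (n : ℕ) (v : ℕ) (h : ℝ) (x : En n) : ℝ :=
  (2 : ℝ) ^ (n * v) * (1 + (2 : ℝ) ^ v * ‖x‖) ^ (-h)

/-- The dyadic cube Q_{v,m}. -/
def dyadicCube (n : ℕ) (v : ℤ) (m : Fin n → ℤ) : Set (En n) :=
  {x | ∀ i, (m i : ℝ) ≤ (2 : ℝ) ^ v * x i ∧ (2 : ℝ) ^ v * x i < m i + 1}

/-- Luxemburg (quasi-)norm of an ℝ≥0∞-valued function with variable exponent `p`. -/
def luxNorm {n : ℕ} (p : En n → ℝ) (F : En n → ℝ≥0∞) : ℝ≥0∞ :=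
  sInf {c : ℝ≥0∞ | 0 < c ∧ ∫⁻ x, (F x / c) ^ p x ≤ 1}

/-- The mixed Lebesgue-sequence space norm ‖(F_v)_v‖_{L^{p(·)}(ℓ_{q(·)})}. -/
def mixedNorm {n : ℕ} (p q : En n → ℝ) (F : ℕ → En n → ℝ≥0∞) : ℝ≥0∞ :=
  luxNorm p fun x => (∑' v : ℕ, F v x ^ q x) ^ (1 / q x)

/-- The sequence space norm ‖λ‖_{f^{α(·)}_{p(·),q(·)}}. -/
def seqNorm {n : ℕ} (α p q : En n → ℝ) (lam : ℕ → (Fin n → ℤ) → ℂ) : ℝ≥0∞ :=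
  mixedNorm p q fun v x =>
    ∑' m : Fin n → ℤ,
      ENNReal.ofReal ((2 : ℝ) ^ ((v : ℝ) * (α x + n / 2)) * ‖lam v m‖) *
        (dyadicCube n (v : ℤ) m).indicator (fun _ => (1 : ℝ≥0∞)) x

/-- The sequence space norm ‖λ‖_{f^{α(·)}_{∞,q}}. -/
def seqNormInf {n : ℕ} (α : En n → ℝ) (q : ℝ) (lam : ℕ → (Fin n → ℤ) → ℂ) : ℝ≥0∞ :=
  ⨆ (vQ : ℤ) (mQ : Fin n → ℤ),
    volume (dyadicCube n vQ mQ) ^ (-(1 / q)) *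
      (∑' v : ℕ, if vQ ≤ (v : ℤ) then
          ∫⁻ x in dyadicCube n vQ mQ,
            ∑' m : Fin n → ℤ,
              ENNReal.ofReal ((2 : ℝ) ^ ((v : ℝ) * (α x + n / 2) * q) * ‖lam v m‖ ^ q) *
                (dyadicCube n (v : ℤ) m).indicator (fun _ => (1 : ℝ≥0∞)) x
        else 0) ^ (1 / q)

/-- The Calderón product (quasi-)norm associated to two sequence space norms. -/
def calderonNorm {n : ℕ} (N0 N1 : (ℕ → (Fin n → ℤ) → ℂ) → ℝ≥0∞) (θ : ℝ)
    (lam : ℕ → (Fin n → ℤ) → ℂ) : ℝ≥0∞ :=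
  sInf {M : ℝ≥0∞ | ∃ μ ν : ℕ → (Fin n → ℤ) → ℂ, N0 μ ≤ 1 ∧ N1 ν ≤ 1 ∧
    ∀ v m, ENNReal.ofReal ‖lam v m‖ ≤
      M * ENNReal.ofReal ‖μ v m‖ ^ (1 - θ) * ENNReal.ofReal ‖ν v m‖ ^ θ}

/-!
Moving the smoothness weight from `x` to `y` costs the factor `(2 ^ v) ^ (α x - α y)`. Put
`a = 2 ^ v`, `r = ‖x - y‖` and `B = 1 + a * r`. Since `a = (a * r) * (1 / r) ≤ B * (e + 1 / r)`, the
logarithm of `a` is at most `(1 + log B) * log (e + 1 / r)`, and the last factor cancels against the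
log-Hölder modulus of continuity of `α`. The cost is therefore at most `(e * B) ^ cα`, and raising
the decay of `η` by `R ≥ cα` pays for the power of `B`.
-/

lemma one_le_log_exp_one_add {t : ℝ} (ht : 0 ≤ t) : 1 ≤ Real.log (Real.exp 1 + t) := by
  rw [Real.le_log_iff_exp_le (by positivity)]
  exact le_add_of_nonneg_right ht

lemma log_le_one_add_log_mul_log {a r : ℝ} (ha : 0 < a) (hr : 0 < r) :
    Real.log a ≤ (1 + Real.log (1 + a * r)) * Real.log (Real.exp 1 + 1 / r) := by
  have hL : 1 ≤ Real.log (Real.exp 1 + 1 / r) := one_le_log_exp_one_add (by positivity)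
  have hB : 0 ≤ Real.log (1 + a * r) := Real.log_nonneg (le_add_of_nonneg_right (by positivity))
  have ha_le : a ≤ (1 + a * r) * (Real.exp 1 + 1 / r) :=
    calc a = a * r * (1 / r) := by field_simp
      _ ≤ (1 + a * r) * (Real.exp 1 + 1 / r) := by
        gcongr
        · exact le_add_of_nonneg_left zero_le_one
        · exact le_add_of_nonneg_left (Real.exp_pos 1).le
  calc Real.log a ≤ Real.log ((1 + a * r) * (Real.exp 1 + 1 / r)) := Real.log_le_log ha ha_le
    _ = Real.log (1 + a * r) + Real.log (Real.exp 1 + 1 / r) :=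
      Real.log_mul (by positivity) (by positivity)
    _ ≤ Real.log (1 + a * r) * Real.log (Real.exp 1 + 1 / r) + Real.log (Real.exp 1 + 1 / r) := by
      gcongr
      exact le_mul_of_one_le_right hB hL
    _ = (1 + Real.log (1 + a * r)) * Real.log (Real.exp 1 + 1 / r) := by ring

section

variable {n : ℕ}

namespace LocLogHolder

variable {c a : ℝ} {g : En n → ℝ}

lemma log_mul_sub_le (hg : LocLogHolder c g) (ha : 1 ≤ a) (x y : En n) :
    Real.log a * (g x - g y) ≤ c * (1 + Real.log (1 + a * ‖x - y‖)) := by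
  obtain ⟨hc, hg⟩ := hg
  have hB : 0 ≤ Real.log (1 + a * ‖x - y‖) :=
    Real.log_nonneg (le_add_of_nonneg_right (by positivity))
  -- On the diagonal `1 / ‖x - y‖ = 1 / 0 = 0`, so the modulus of continuity does not vanish there.
  obtain rfl | hxy := eq_or_ne x y
  · rw [sub_self, mul_zero]
    positivity
  have hr : 0 < ‖x - y‖ := norm_sub_pos_iff.mpr hxy
  have hL : 0 < Real.log (Real.exp 1 + 1 / ‖x - y‖) :=
    one_pos.trans_le (one_le_log_exp_one_add (by positivity))
  calc Real.log a * (g x - g y)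
      ≤ Real.log a * (c / Real.log (Real.exp 1 + 1 / ‖x - y‖)) :=
        mul_le_mul_of_nonneg_left ((le_abs_self _).trans (hg x y)) (Real.log_nonneg ha)
    _ = c * (Real.log a / Real.log (Real.exp 1 + 1 / ‖x - y‖)) := mul_div_left_comm _ _ _
    _ ≤ c * (1 + Real.log (1 + a * ‖x - y‖)) := by
        gcongr
        exact (div_le_iff₀ hL).mpr (log_le_one_add_log_mul_log (one_pos.trans_le ha) hr)

lemma rpow_sub_le (hg : LocLogHolder c g) (ha : 1 ≤ a) (x y : En n) :
    a ^ (g x - g y) ≤ Real.exp c * (1 + a * ‖x - y‖) ^ c := by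
  have hB : 0 < 1 + a * ‖x - y‖ := by positivity
  rw [Real.rpow_def_of_pos (one_pos.trans_le ha), Real.rpow_def_of_pos hB, ← Real.exp_add,
    Real.exp_le_exp]
  linarith [hg.log_mul_sub_le ha x y]

end LocLogHolder

lemma eta_nonneg (v : ℕ) (h : ℝ) (x : En n) : 0 ≤ eta n v h x := by
  unfold eta
  positivity

lemma rpow_mul_eta_add (v : ℕ) (h k : ℝ) (x : En n) :
    (1 + 2 ^ v * ‖x‖) ^ k * eta n v (h + k) x = eta n v h x := by
  have hB : 0 < 1 + 2 ^ v * ‖x‖ := by positivity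
  rw [eta, eta, mul_left_comm, ← Real.rpow_add hB, neg_add, add_neg_cancel_comm_assoc]

theorem stmt0_general {α : En n → ℝ} {cα R : ℝ} (hα : LocLogHolder cα α) (hR : cα ≤ R)
    (x y : En n) (v : ℕ) (h : ℝ) :
    (2 : ℝ) ^ ((v : ℝ) * α x) * eta n v (h + R) (x - y) ≤
      Real.exp cα * ((2 : ℝ) ^ ((v : ℝ) * α y) * eta n v h (x - y)) := by
  have hB : 1 ≤ 1 + 2 ^ v * ‖x - y‖ := le_add_of_nonneg_right (by positivity)
  have h_sub : (2 : ℝ) ^ ((v : ℝ) * (α x - α y)) ≤ Real.exp cα * (1 + 2 ^ v * ‖x - y‖) ^ R :=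
    calc (2 : ℝ) ^ ((v : ℝ) * (α x - α y)) = ((2 : ℝ) ^ v) ^ (α x - α y) :=
          Real.rpow_natCast_mul zero_le_two v _
      _ ≤ Real.exp cα * (1 + 2 ^ v * ‖x - y‖) ^ cα :=
          hα.rpow_sub_le (one_le_pow₀ one_le_two) x y
      _ ≤ Real.exp cα * (1 + 2 ^ v * ‖x - y‖) ^ R := by gcongr
  calc (2 : ℝ) ^ ((v : ℝ) * α x) * eta n v (h + R) (x - y)
      = (2 : ℝ) ^ ((v : ℝ) * α y) * (2 : ℝ) ^ ((v : ℝ) * (α x - α y)) *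
          eta n v (h + R) (x - y) := by
        rw [← Real.rpow_add two_pos, ← mul_add, add_sub_cancel]
    _ ≤ (2 : ℝ) ^ ((v : ℝ) * α y) * (Real.exp cα * (1 + 2 ^ v * ‖x - y‖) ^ R) *
          eta n v (h + R) (x - y) := by
        gcongr
        exact eta_nonneg v (h + R) (x - y)
    _ = Real.exp cα * ((2 : ℝ) ^ ((v : ℝ) * α y) * eta n v h (x - y)) := by
        rw [← rpow_mul_eta_add v h R]
        ring

end

/-- Lemma on moving variable smoothness (Lemma `DHR-lemma`):
if `α` is locally log-Hölder with constant `cα` and `R ≥ cα`, then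
`2^{vα(x)} η_{v,h+R}(x−y) ≤ c 2^{vα(y)} η_{v,h}(x−y)` for all `x, y, v, h`. -/
theorem stmt0 {n : ℕ} (α : En n → ℝ) (cα : ℝ) (hα : LocLogHolder cα α)
    (R : ℝ) (hR : cα ≤ R) :
    ∃ c : ℝ, 0 < c ∧ ∀ (x y : En n) (v h : ℕ),
      (2 : ℝ) ^ ((v : ℝ) * α x) * eta n v ((h : ℝ) + R) (x - y) ≤
        c * ((2 : ℝ) ^ ((v : ℝ) * α y) * eta n v (h : ℝ) (x - y)) :=
  ⟨Real.exp cα, Real.exp_pos cα, fun x y v h => stmt0_general hα hR x y v h⟩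
end
end

section
/- Let α : ℝ^n → ℝ be locally log-Hölder continuous and let p, q be globally log-Hölder continuous exponents with 0 < p⁻ ≤ p⁺ < ∞ and 0 < q⁻ ≤ q⁺ < ∞. Then there exists a constant c > 0 such that for every complex sequence λ = {λ_{v,m}}_{v∈ℕ₀,m∈ℤ^n} with ‖λ‖_{f^{α(·)}_{p(·),q(·)}} < ∞, every j ∈ ℕ₀, every m ∈ ℤ^n, and every x ∈ Q_{j,m}, one has |λ_{j,m}| ≤ c 2^{−j(α(x) − n/p(x) + n/2)} ‖λ‖_{f^{α(·)}_{p(·),q(·)}}, with c independent of j, m, x and λ. -/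
open MeasureTheory ENNReal Real Set

noncomputable section

/-!
The exponent `s = α - n / p` is locally log-Hölder continuous, because `p` is bounded away from
zero. Two points of a dyadic cube `Q` of side `2⁻ʲ` are at distance at most `√n 2⁻ʲ`, so
`2 ^ (j s(x))` and `2 ^ (j s(y))` are comparable for `x, y ∈ Q`, uniformly in `j` and `Q`.
On `Q = Q_{j,m}` the function whose `L^{p(·)}` norm is `‖λ‖` is at least
`2 ^ (j (α + n / 2)) |λ_{j,m}|`, and a function bounded below by `N |Q| ^ (-1 / p(·))` on `Q` has
norm at least `N`. Since `|Q| = 2 ^ (-j n)`, this bounds `‖λ‖` below by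
`inf_{y ∈ Q} 2 ^ (j (s(y) + n / 2)) |λ_{j,m}|`.
-/

namespace LocLogHolder

variable {n : ℕ} {c c' : ℝ} {g h : En n → ℝ}

lemma inv {a : ℝ} (hg : LocLogHolder c g) (ha : 0 < a) (hag : ∀ x, a ≤ g x) :
    LocLogHolder (c / a ^ 2) fun x => (g x)⁻¹ := by
  refine ⟨div_pos hg.1 (by positivity), fun x y => ?_⟩
  have hx : 0 < g x := ha.trans_le (hag x)
  have hy : 0 < g y := ha.trans_le (hag y)
  calc |(g x)⁻¹ - (g y)⁻¹| = |g x - g y| / (g x * g y) := by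
        rw [inv_sub_inv hx.ne' hy.ne', abs_div, abs_of_pos (mul_pos hx hy), abs_sub_comm]
    _ ≤ |g x - g y| / a ^ 2 := by
        rw [sq]
        gcongr <;> apply hag
    _ ≤ c / Real.log (Real.exp 1 + 1 / ‖x - y‖) / a ^ 2 := by
        gcongr
        exact hg.2 x y
    _ = c / a ^ 2 / Real.log (Real.exp 1 + 1 / ‖x - y‖) := div_right_comm ..

lemma sub_const_mul (hg : LocLogHolder c g) (hh : LocLogHolder c' h) (k : ℝ) :
    LocLogHolder (c + |k| * c') fun x => g x - k * h x := by
  refine ⟨add_pos_of_pos_of_nonneg hg.1 (mul_nonneg (abs_nonneg k) hh.1.le), fun x y => ?_⟩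
  calc |g x - k * h x - (g y - k * h y)| = |(g x - g y) - k * (h x - h y)| := by ring_nf
    _ ≤ |g x - g y| + |k| * |h x - h y| := by
        rw [← abs_mul]
        exact abs_sub _ _
    _ ≤ c / Real.log (Real.exp 1 + 1 / ‖x - y‖) +
          |k| * (c' / Real.log (Real.exp 1 + 1 / ‖x - y‖)) := by
        gcongr
        exacts [hg.2 x y, hh.2 x y]
    _ = (c + |k| * c') / Real.log (Real.exp 1 + 1 / ‖x - y‖) := by ring

lemma sub_const_div {a : ℝ} (hg : LocLogHolder c g) (hh : LocLogHolder c' h) (ha : 0 < a)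
    (hah : ∀ x, a ≤ h x) (k : ℝ) :
    LocLogHolder (c + |k| * (c' / a ^ 2)) fun x => g x - k / h x := by
  simpa only [div_eq_mul_inv] using hg.sub_const_mul (hh.inv ha hah) k

lemma log_mul_abs_sub_le {T D : ℝ} {x y : En n} (hg : LocLogHolder c g) (hT : 0 < T)
    (hxy : T * ‖x - y‖ ≤ D) : Real.log T * |g x - g y| ≤ c * (1 + Real.log (1 + D)) := by
  have hc : 0 < c := hg.1
  have hD : 0 ≤ D := le_trans (by positivity) hxy
  have hlogD : 0 ≤ Real.log (1 + D) := Real.log_nonneg (by linarith)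
  rcases eq_or_ne x y with rfl | hne
  · rw [sub_self, abs_zero, mul_zero]
    positivity
  have hpos : 0 < ‖x - y‖ := norm_sub_pos_iff.mpr hne
  set L := Real.log (Real.exp 1 + 1 / ‖x - y‖)
  have one_le_L : 1 ≤ L := by
    rw [Real.le_log_iff_exp_le (by positivity)]
    exact le_add_of_nonneg_right (by positivity)
  have logT_le : Real.log T ≤ Real.log (1 + D) + L := by
    rw [← Real.log_mul (by positivity) (by positivity)]
    apply Real.log_le_log hT
    calc T ≤ D * (1 / ‖x - y‖) := by rwa [mul_one_div, le_div_iff₀ hpos]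
      _ ≤ (1 + D) * (Real.exp 1 + 1 / ‖x - y‖) := by
        gcongr
        exacts [by linarith, le_add_of_nonneg_left (Real.exp_pos 1).le]
  calc Real.log T * |g x - g y| ≤ ((1 + Real.log (1 + D)) * L) * |g x - g y| := by
        gcongr
        nlinarith
    _ = (1 + Real.log (1 + D)) * (|g x - g y| * L) := by ring
    _ ≤ (1 + Real.log (1 + D)) * c := by
        gcongr
        exact (le_div_iff₀ (by positivity)).mp (hg.2 x y)
    _ = c * (1 + Real.log (1 + D)) := mul_comm _ _

lemma rpow_le_mul_rpow {T D : ℝ} {x y : En n} (hg : LocLogHolder c g) (hT : 1 ≤ T)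
    (hxy : T * ‖x - y‖ ≤ D) : T ^ g x ≤ Real.exp (c * (1 + Real.log (1 + D))) * T ^ g y := by
  have hT₀ : 0 < T := one_pos.trans_le hT
  rw [Real.rpow_def_of_pos hT₀, Real.rpow_def_of_pos hT₀, ← Real.exp_add, Real.exp_le_exp,
    ← sub_le_iff_le_add, ← mul_sub]
  calc Real.log T * (g x - g y) ≤ Real.log T * |g x - g y| :=
        mul_le_mul_of_nonneg_left (le_abs_self _) (Real.log_nonneg hT)
    _ ≤ c * (1 + Real.log (1 + D)) := hg.log_mul_abs_sub_le hT₀ hxy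

end LocLogHolder

namespace dyadicCube

variable {n : ℕ} {v : ℤ} {m : Fin n → ℤ}

lemma zpow_mul_norm_sub_le {x y : En n} (hx : x ∈ dyadicCube n v m) (hy : y ∈ dyadicCube n v m) :
    (2 : ℝ) ^ v * ‖x - y‖ ≤ √n := by
  have hcoord (i : Fin n) : ‖((2 : ℝ) ^ v • (x - y)) i‖ ≤ 1 := by
    rw [PiLp.smul_apply, PiLp.sub_apply, smul_eq_mul, mul_sub, Real.norm_eq_abs, abs_le]
    constructor <;> linarith [hx i, hy i]
  calc (2 : ℝ) ^ v * ‖x - y‖ = ‖(2 : ℝ) ^ v • (x - y)‖ := by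
        rw [norm_smul, Real.norm_of_nonneg (by positivity)]
    _ = √(∑ i, ‖((2 : ℝ) ^ v • (x - y)) i‖ ^ 2) := EuclideanSpace.norm_eq _
    _ ≤ √(∑ _i : Fin n, 1) := by
        gcongr with i
        exact pow_le_one₀ (norm_nonneg _) (hcoord i)
    _ = √n := by simp

variable (v m)

lemma eq_preimage_pi_Ico : dyadicCube n v m = (WithLp.ofLp : En n → Fin n → ℝ) ⁻¹'
    univ.pi fun i => Ico ((m i : ℝ) / 2 ^ v) ((m i + 1) / 2 ^ v) := by
  ext x
  simp only [dyadicCube, mem_ofPred_eq, mem_preimage, mem_univ_pi, mem_Ico]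
  refine forall_congr' fun i => ?_
  rw [div_le_iff₀' (by positivity), lt_div_iff₀' (by positivity)]

lemma measurableSet : MeasurableSet (dyadicCube n v m) := by
  rw [eq_preimage_pi_Ico]
  exact (PiLp.volume_preserving_ofLp (Fin n)).measurable
    (MeasurableSet.univ_pi fun _ => measurableSet_Ico)

lemma volume_eq : volume (dyadicCube n v m) = ENNReal.ofReal (((2 : ℝ) ^ v)⁻¹ ^ n) := by
  have hside (i : Fin n) : ((m i : ℝ) + 1) / 2 ^ v - m i / 2 ^ v = ((2 : ℝ) ^ v)⁻¹ := by ring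
  rw [eq_preimage_pi_Ico, (PiLp.volume_preserving_ofLp (Fin n)).measure_preimage
    (MeasurableSet.univ_pi fun _ => measurableSet_Ico).nullMeasurableSet, Real.volume_pi_Ico]
  simp only [hside, Finset.prod_const, Finset.card_univ, Fintype.card_fin]
  rw [ENNReal.ofReal_pow (by positivity)]

end dyadicCube

section VariableExponent

variable {n : ℕ} {p q : En n → ℝ}

lemma luxNorm_mono {F G : En n → ℝ≥0∞} (hp : ∀ x, 0 ≤ p x) (hFG : F ≤ G) :
    luxNorm p F ≤ luxNorm p G :=
  sInf_le_sInf fun _ hc => ⟨hc.1, (lintegral_mono fun x =>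
    ENNReal.rpow_le_rpow (ENNReal.div_le_div_right (hFG x) _) (hp x)).trans hc.2⟩

lemma le_luxNorm_of_le_mul_volume_rpow {F : En n → ℝ≥0∞} {E : Set (En n)} {N : ℝ≥0∞} {a : ℝ}
    (ha : 0 < a) (hp : ∀ x ∈ E, a ≤ p x) (hE : MeasurableSet E) (hE₀ : volume E ≠ 0)
    (hE' : volume E ≠ ∞) (hF : ∀ x ∈ E, N ≤ F x * volume E ^ (1 / p x)) : N ≤ luxNorm p F := by
  refine le_sInf fun c ⟨hc₀, hc⟩ => ?_
  by_contra! hcN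
  have hr : 1 < N / c := (ENNReal.lt_div_iff_mul_lt (.inl hc₀.ne') (.inl hcN.ne_top)).mpr
    (by rwa [one_mul])
  have hpointwise : ∀ x ∈ E, (N / c) ^ a / volume E ≤ (F x / c) ^ p x := fun x hx => by
    have hpx : 0 < p x := ha.trans_le (hp x hx)
    rw [ENNReal.div_le_iff hE₀ hE']
    calc (N / c) ^ a ≤ (N / c) ^ p x := ENNReal.rpow_le_rpow_of_exponent_le hr.le (hp x hx)
      _ ≤ (F x / c * volume E ^ (1 / p x)) ^ p x := by
          gcongr
          rw [← ENNReal.mul_div_right_comm]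
          exact ENNReal.div_le_div_right (hF x hx) c
      _ = (F x / c) ^ p x * volume E := by
          rw [ENNReal.mul_rpow_of_nonneg _ _ hpx.le, ← ENNReal.rpow_mul,
            one_div_mul_cancel hpx.ne', ENNReal.rpow_one]
  have hle : (N / c) ^ a ≤ 1 :=
    calc (N / c) ^ a = ∫⁻ _ in E, (N / c) ^ a / volume E := by
          rw [setLIntegral_const, ENNReal.div_mul_cancel hE₀ hE']
      _ ≤ ∫⁻ x in E, (F x / c) ^ p x := setLIntegral_mono' hE hpointwise
      _ ≤ ∫⁻ x, (F x / c) ^ p x := setLIntegral_le_lintegral _ _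
      _ ≤ 1 := hc
  exact hle.not_gt (ENNReal.one_lt_rpow hr ha)

lemma le_tsum_rpow_rpow_one_div {ι : Type*} (f : ι → ℝ≥0∞) {r : ℝ} (hr : 0 < r) (i : ι) :
    f i ≤ (∑' k, f k ^ r) ^ (1 / r) := by
  rw [one_div, ENNReal.le_rpow_inv_iff hr]
  exact ENNReal.le_tsum i

lemma luxNorm_le_mixedNorm (hp : ∀ x, 0 ≤ p x) (hq : ∀ x, 0 < q x) (F : ℕ → En n → ℝ≥0∞)
    (v : ℕ) : luxNorm p (F v) ≤ mixedNorm p q F :=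
  luxNorm_mono hp fun x => le_tsum_rpow_rpow_one_div (F · x) (hq x) v

variable {α : En n → ℝ}

lemma le_seqNorm_of_forall_mem {a : ℝ} (ha : 0 < a) (hp : ∀ x, a ≤ p x) (hq : ∀ x, 0 < q x)
    {lam : ℕ → (Fin n → ℤ) → ℂ} {j : ℕ} {m : Fin n → ℤ} {N : ℝ≥0∞}
    (hN : ∀ y ∈ dyadicCube n j m,
      N ≤ ENNReal.ofReal (((2 : ℝ) ^ j) ^ (α y - n / p y + n / 2) * ‖lam j m‖)) :
    N ≤ seqNorm α p q lam := by
  have hvol := dyadicCube.volume_eq (j : ℤ) m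
  refine le_trans ?_ (luxNorm_le_mixedNorm (fun x => ha.le.trans (hp x)) hq _ j)
  refine le_luxNorm_of_le_mul_volume_rpow ha (fun x _ => hp x) (dyadicCube.measurableSet j m)
    (by rw [hvol]; simp) (by rw [hvol]; exact ENNReal.ofReal_ne_top) fun y hy => ?_
  have hpy : 0 < p y := ha.trans_le (hp y)
  have hscale : ((2 : ℝ) ^ j) ^ (α y - n / p y + n / 2) =
      (2 : ℝ) ^ ((j : ℝ) * (α y + n / 2)) * (((2 : ℝ) ^ (j : ℤ))⁻¹ ^ n) ^ (1 / p y) := by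
    rw [zpow_natCast, Real.rpow_natCast_mul zero_le_two, ← Real.rpow_natCast _ n,
      ← Real.rpow_mul (by positivity), mul_one_div, Real.inv_rpow (by positivity),
      ← Real.rpow_neg (by positivity), ← Real.rpow_add (by positivity)]
    congr 1
    ring
  calc N ≤ ENNReal.ofReal (((2 : ℝ) ^ j) ^ (α y - n / p y + n / 2) * ‖lam j m‖) := hN y hy
    _ = ENNReal.ofReal ((2 : ℝ) ^ ((j : ℝ) * (α y + n / 2)) * ‖lam j m‖) *
          volume (dyadicCube n j m) ^ (1 / p y) := by
        rw [hvol, ENNReal.ofReal_rpow_of_nonneg (by positivity) (by positivity),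
          ← ENNReal.ofReal_mul (by positivity), hscale, mul_right_comm]
    _ ≤ _ := by
        gcongr
        refine le_trans (le_of_eq ?_) (ENNReal.le_tsum m)
        rw [indicator_of_mem hy, mul_one]

end VariableExponent

theorem stmt4_general {n : ℕ} (α p q : En n → ℝ)
    (hs : ∃ c, LocLogHolder c fun x => α x - n / p x) (hp : ∃ a, 0 < a ∧ ∀ x, a ≤ p x)
    (hq : ∀ x, 0 < q x) :
    ∃ c : ℝ, 0 < c ∧ ∀ (lam : ℕ → (Fin n → ℤ) → ℂ) (j : ℕ) (m : Fin n → ℤ),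
      ∀ x ∈ dyadicCube n (j : ℤ) m,
        ENNReal.ofReal ‖lam j m‖ ≤
          ENNReal.ofReal (c * (2 : ℝ) ^ (-(j : ℝ) * (α x - n / p x + n / 2))) *
            seqNorm α p q lam := by
  obtain ⟨c, hs⟩ := hs
  obtain ⟨a, ha, hp⟩ := hp
  set C := Real.exp (c * (1 + Real.log (1 + √n)))
  have hC : 0 < C := Real.exp_pos _
  refine ⟨C, hC, fun lam j m x hx => ?_⟩
  set w : En n → ℝ := fun y => ((2 : ℝ) ^ j) ^ (α y - n / p y + n / 2)
  have hwx : 0 < w x := by positivity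
  have hosc : ∀ y ∈ dyadicCube n j m, w x ≤ C * w y := fun y hy => by
    have hdist := dyadicCube.zpow_mul_norm_sub_le hx hy
    rw [zpow_natCast] at hdist
    simp only [w]
    rw [Real.rpow_add (by positivity), Real.rpow_add (by positivity), ← mul_assoc]
    gcongr
    exact hs.rpow_le_mul_rpow (one_le_pow₀ one_le_two) hdist
  have hinv : (2 : ℝ) ^ (-(j : ℝ) * (α x - n / p x + n / 2)) = (w x)⁻¹ := by
    rw [neg_mul, Real.rpow_neg zero_le_two, Real.rpow_natCast_mul zero_le_two]
  have hlow : ENNReal.ofReal (w x / C * ‖lam j m‖) ≤ seqNorm α p q lam :=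
    le_seqNorm_of_forall_mem ha hp hq fun y hy => by
      gcongr
      exact (div_le_iff₀' hC).mpr (hosc y hy)
  calc ENNReal.ofReal ‖lam j m‖
      = ENNReal.ofReal (C * (w x)⁻¹) * ENNReal.ofReal (w x / C * ‖lam j m‖) := by
        rw [← ENNReal.ofReal_mul (by positivity)]
        congr 1
        field_simp
    _ ≤ _ := by
        rw [hinv]
        gcongr

/-- Lemma `lamda-est`: pointwise estimate for the coefficients of a
sequence in `f^{α(·)}_{p(·),q(·)}`. -/
theorem stmt4 {n : ℕ} (α p q : En n → ℝ)
    (hα : ∃ c, LocLogHolder c α) (hp : ∃ c, GlobLogHolder c p) (hq : ∃ c, GlobLogHolder c q)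
    (hpb : ∃ a b : ℝ, 0 < a ∧ ∀ x, a ≤ p x ∧ p x ≤ b)
    (hqb : ∃ a b : ℝ, 0 < a ∧ ∀ x, a ≤ q x ∧ q x ≤ b) :
    ∃ c : ℝ, 0 < c ∧ ∀ lam : ℕ → (Fin n → ℤ) → ℂ, seqNorm α p q lam ≠ ∞ →
      ∀ (j : ℕ) (m : Fin n → ℤ), ∀ x ∈ dyadicCube n (j : ℤ) m,
        ENNReal.ofReal ‖lam j m‖ ≤
          ENNReal.ofReal (c * (2 : ℝ) ^ (-(j : ℝ) * (α x - n / p x + n / 2))) *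
            seqNorm α p q lam := by
  obtain ⟨_, hα⟩ := hα
  obtain ⟨_, hp, -⟩ := hp
  obtain ⟨a, _, ha, hpb⟩ := hpb
  obtain ⟨_, _, ha', hqb⟩ := hqb
  obtain ⟨c, hc, h⟩ := stmt4_general α p q ⟨_, hα.sub_const_div hp ha (fun x => (hpb x).1) n⟩
    ⟨a, ha, fun x => (hpb x).1⟩ fun x => ha'.trans_le (hqb x).1
  exact ⟨c, hc, fun lam _ => h lam⟩
end
end
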